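/- arXiv:1307.5619 — 11 statements merged into one kernel-verified Lean document; each statement's English description precedes it below -/
import Mathlib

section
/- If X ⊲ Y, then it is not the case that Y < X. -/
/-!
If `X` is a negative check and `Y` a delivery with `rn X < dn Y`, then `Y < X` would force `X` to be
positive. If `X` is a delivery and `Y` a positive check with `dn X = rn Y + 1`, then `Y < X` gives
`ρ Y < X`. Delivery numbers increase strictly along the order (a finite initial segment of
deliveries gains at least the later delivery), so `rn Y < dn (ρ Y) < dn X = rn Y + 1`, which is
impossible.
-/


theorem stmt_0 {E : Type*} (lt : E → E → Prop)
    (Deliver Check Remove positive : E → Prop)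
    (dn rn : E → ℕ) (ρ : E → E)
    (A1_irr : ∀ X, ¬ lt X X)
    (A1_trans : ∀ X Y Z, lt X Y → lt Y Z → lt X Z)
    (A2 : ∀ X₁ X₂ X₃ X₄, lt X₁ X₂ → lt X₃ X₄ → ¬ lt X₂ X₃ → ¬ lt X₃ X₂ → lt X₁ X₄)
    (A3 : ∀ A : E, {Y | ¬ lt A Y}.Finite)
    (A4_dc : ∀ X, ¬ (Deliver X ∧ Check X))
    (A4_dr : ∀ X, ¬ (Deliver X ∧ Remove X))
    (A4_cr : ∀ X, ¬ (Check X ∧ Remove X))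
    (A5_lin : ∀ d₁ d₂, Deliver d₁ → Deliver d₂ → d₁ ≠ d₂ → lt d₁ d₂ ∨ lt d₂ d₁)
    (A5_dn : ∀ d, Deliver d → dn d = Set.ncard {d' | Deliver d' ∧ (d' = d ∨ lt d' d)})
    (A6_lin : ∀ x₁ x₂, Check x₁ ∨ Remove x₁ → Check x₂ ∨ Remove x₂ → x₁ ≠ x₂ → lt x₁ x₂ ∨ lt x₂ x₁)
    (A6_rn : ∀ x, Check x ∨ Remove x → rn x = Set.ncard {r | Remove r ∧ (r = x ∨ lt r x)})
    (A7_check : ∀ C, Check C → positive C → ∃ R, Remove R ∧ lt C R ∧ ∀ X, Check X ∨ Remove X → ¬ (lt C X ∧ lt X R))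
    (A7_rem : ∀ R, Remove R → ∃ C, Check C ∧ positive C ∧ lt C R ∧ ∀ X, Check X ∨ Remove X → ¬ (lt C X ∧ lt X R))
    (A8 : ∀ C, Check C → positive C → Deliver (ρ C) ∧ rn C < dn (ρ C))
    (A9 : ∀ D C, Deliver D → Check C → lt D C → rn C < dn D → positive C)
    (A10 : ∀ C D, Check C → positive C → Deliver D → lt C D → lt (ρ C) D)
    (tri : E → E → Prop)
    (htri : ∀ X Y, tri X Y ↔
      (Check X ∧ ¬ positive X ∧ Deliver Y ∧ rn X < dn Y) ∨
      (Deliver X ∧ Check Y ∧ positive Y ∧ dn X = rn Y + 1))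
    : ∀ X Y, tri X Y → ¬ lt Y X := by
  intro X Y hXY hYX
  rcases (htri X Y).1 hXY with ⟨hX, hneg, hY, hlt⟩ | ⟨hX, hY, hpos, heq⟩
  · exact hneg (A9 Y X hY hX hYX hlt)
  · have hρX : lt (ρ Y) X := A10 Y X hY hpos hX hYX
    obtain ⟨hρ, hρn⟩ := A8 Y hY hpos
    have hdn : dn (ρ Y) < dn X := by
      rw [A5_dn _ hρ, A5_dn _ hX]
      apply Set.ncard_lt_ncard
      · refine ⟨?_, fun h => ?_⟩
        · rintro d ⟨hd, rfl | hdρ⟩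
          · exact ⟨hd, Or.inr hρX⟩
          · exact ⟨hd, Or.inr (A1_trans _ _ _ hdρ hρX)⟩
        · rcases (h ⟨hX, Or.inl rfl⟩ : Deliver X ∧ (X = ρ Y ∨ lt X (ρ Y))).2 with he | hl
          · exact A1_irr X (by rwa [← he] at hρX)
          · exact A1_irr X (A1_trans _ _ _ hl hρX)
      -- `ncard` is `0` on infinite sets, so finiteness of the segment below `X` is essential.
      · refine (A3 X).subset ?_
        rintro d ⟨-, rfl | hdX⟩
        · exact A1_irr d
        · exact fun h => A1_irr X (A1_trans _ _ _ h hdX)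
    omega
end

section
/- If C and C' are Check events and D is a Deliver event such that C ⊲ D and D ⊲ C', then C < C'. -/
/-!
The relations `C ⊲ D` and `D ⊲ C'` say that `C` is negative, `C'` is positive and
`rn C < dn D = rn C' + 1`, so `rn C ≤ rn C'`. Since homeowner events are linearly ordered, it
suffices to exclude `C' < C`. In that case the Remove event that immediately follows the positive
check `C'` also precedes `C`, so it is counted by `rn C` but not by `rn C'`, forcing
`rn C' < rn C`, a contradiction.
-/

theorem stmt_1 {E : Type*} (lt : E → E → Prop)
    (Deliver Check Remove positive : E → Prop)
    (dn rn : E → ℕ) (ρ : E → E)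
    (A1_irr : ∀ X, ¬ lt X X)
    (A1_trans : ∀ X Y Z, lt X Y → lt Y Z → lt X Z)
    (A2 : ∀ X₁ X₂ X₃ X₄, lt X₁ X₂ → lt X₃ X₄ → ¬ lt X₂ X₃ → ¬ lt X₃ X₂ → lt X₁ X₄)
    (A3 : ∀ A : E, {Y | ¬ lt A Y}.Finite)
    (A4_dc : ∀ X, ¬ (Deliver X ∧ Check X))
    (A4_dr : ∀ X, ¬ (Deliver X ∧ Remove X))
    (A4_cr : ∀ X, ¬ (Check X ∧ Remove X))
    (A5_lin : ∀ d₁ d₂, Deliver d₁ → Deliver d₂ → d₁ ≠ d₂ → lt d₁ d₂ ∨ lt d₂ d₁)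
    (A5_dn : ∀ d, Deliver d → dn d = Set.ncard {d' | Deliver d' ∧ (d' = d ∨ lt d' d)})
    (A6_lin : ∀ x₁ x₂, Check x₁ ∨ Remove x₁ → Check x₂ ∨ Remove x₂ → x₁ ≠ x₂ → lt x₁ x₂ ∨ lt x₂ x₁)
    (A6_rn : ∀ x, Check x ∨ Remove x → rn x = Set.ncard {r | Remove r ∧ (r = x ∨ lt r x)})
    (A7_check : ∀ C, Check C → positive C → ∃ R, Remove R ∧ lt C R ∧ ∀ X, Check X ∨ Remove X → ¬ (lt C X ∧ lt X R))
    (A7_rem : ∀ R, Remove R → ∃ C, Check C ∧ positive C ∧ lt C R ∧ ∀ X, Check X ∨ Remove X → ¬ (lt C X ∧ lt X R))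
    (A8 : ∀ C, Check C → positive C → Deliver (ρ C) ∧ rn C < dn (ρ C))
    (A9 : ∀ D C, Deliver D → Check C → lt D C → rn C < dn D → positive C)
    (A10 : ∀ C D, Check C → positive C → Deliver D → lt C D → lt (ρ C) D)
    (tri : E → E → Prop)
    (htri : ∀ X Y, tri X Y ↔
      (Check X ∧ ¬ positive X ∧ Deliver Y ∧ rn X < dn Y) ∨
      (Deliver X ∧ Check Y ∧ positive Y ∧ dn X = rn Y + 1))
    : ∀ C C' D, Check C → Check C' → Deliver D → tri C D → tri D C' → lt C C' := by
  intro C C' D hC hC' hD h₁ h₂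
  obtain ⟨-, hneg, -, hrn⟩ : Check C ∧ ¬ positive C ∧ Deliver D ∧ rn C < dn D := by
    rcases (htri C D).1 h₁ with h | h
    · exact h
    · exact absurd ⟨h.1, hC⟩ (A4_dc C)
  obtain ⟨-, -, hpos, hdn⟩ : Deliver D ∧ Check C' ∧ positive C' ∧ dn D = rn C' + 1 := by
    rcases (htri D C').1 h₂ with h | h
    · exact absurd ⟨hD, h.1⟩ (A4_dc D)
    · exact h
  have hne : C ≠ C' := fun h => hneg (h ▸ hpos)
  rcases A6_lin C C' (Or.inl hC) (Or.inl hC') hne with h | hlt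
  · exact h
  exfalso
  obtain ⟨R, hR, hCR, himm⟩ := A7_check C' hC' hpos
  have hRC : lt R C := by
    have hRne : R ≠ C := fun h => A4_cr C ⟨hC, h ▸ hR⟩
    rcases A6_lin R C (Or.inr hR) (Or.inl hC) hRne with h | h
    · exact h
    · exact absurd ⟨hlt, h⟩ (himm C (Or.inl hC))
  have hfin : {r | Remove r ∧ (r = C ∨ lt r C)}.Finite := by
    refine (A3 C).subset ?_
    rintro r ⟨-, rfl | hr⟩ h
    · exact A1_irr _ h
    · exact A1_irr _ (A1_trans _ _ _ h hr)
  have hss : {r | Remove r ∧ (r = C' ∨ lt r C')} ⊂ {r | Remove r ∧ (r = C ∨ lt r C)} := by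
    refine (Set.ssubset_iff_of_subset ?_).2 ⟨R, ⟨hR, Or.inr hRC⟩, ?_⟩
    · rintro r ⟨hr, rfl | hr'⟩
      · exact ⟨hr, Or.inr hlt⟩
      · exact ⟨hr, Or.inr (A1_trans _ _ _ hr' hlt)⟩
    · rintro ⟨-, rfl | h⟩
      · exact A1_irr _ hCR
      · exact A1_irr _ (A1_trans _ _ _ h hCR)
  have hcard := Set.ncard_lt_ncard hss hfin
  rw [← A6_rn C (Or.inl hC), ← A6_rn C' (Or.inl hC')] at hcard
  omega
end

section
/- For any events X, Y, Z, if X ⊲ Y and Y ⊲ Z, then X < Z. -/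
/-!
A chain `X ⊲ Y ⊲ Z` can only run from a negative Check `X` through a Deliver `Y` to a positive
Check `Z`: a positive Check is never on the left of `⊲`. The two inequalities then combine
to `rn X < dn Y = rn Z + 1`, that is `rn X ≤ rn Z`.

Homeowner events are linearly ordered and `X ≠ Z`, so it remains to exclude `Z < X`. In that case
the Remove event immediately following the positive Check `Z` also precedes `X`, whence
`rn Z < rn X`, a contradiction. Finiteness of the past of `X` makes the cardinality comparison
meaningful.
-/


theorem stmt_3 {E : Type*} (lt : E → E → Prop)
    (Deliver Check Remove positive : E → Prop)
    (dn rn : E → ℕ) (ρ : E → E)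
    (A1_irr : ∀ X, ¬ lt X X)
    (A1_trans : ∀ X Y Z, lt X Y → lt Y Z → lt X Z)
    (A2 : ∀ X₁ X₂ X₃ X₄, lt X₁ X₂ → lt X₃ X₄ → ¬ lt X₂ X₃ → ¬ lt X₃ X₂ → lt X₁ X₄)
    (A3 : ∀ A : E, {Y | ¬ lt A Y}.Finite)
    (A4_dc : ∀ X, ¬ (Deliver X ∧ Check X))
    (A4_dr : ∀ X, ¬ (Deliver X ∧ Remove X))
    (A4_cr : ∀ X, ¬ (Check X ∧ Remove X))
    (A5_lin : ∀ d₁ d₂, Deliver d₁ → Deliver d₂ → d₁ ≠ d₂ → lt d₁ d₂ ∨ lt d₂ d₁)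
    (A5_dn : ∀ d, Deliver d → dn d = Set.ncard {d' | Deliver d' ∧ (d' = d ∨ lt d' d)})
    (A6_lin : ∀ x₁ x₂, Check x₁ ∨ Remove x₁ → Check x₂ ∨ Remove x₂ → x₁ ≠ x₂ → lt x₁ x₂ ∨ lt x₂ x₁)
    (A6_rn : ∀ x, Check x ∨ Remove x → rn x = Set.ncard {r | Remove r ∧ (r = x ∨ lt r x)})
    (A7_check : ∀ C, Check C → positive C → ∃ R, Remove R ∧ lt C R ∧ ∀ X, Check X ∨ Remove X → ¬ (lt C X ∧ lt X R))
    (A7_rem : ∀ R, Remove R → ∃ C, Check C ∧ positive C ∧ lt C R ∧ ∀ X, Check X ∨ Remove X → ¬ (lt C X ∧ lt X R))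
    (A8 : ∀ C, Check C → positive C → Deliver (ρ C) ∧ rn C < dn (ρ C))
    (A9 : ∀ D C, Deliver D → Check C → lt D C → rn C < dn D → positive C)
    (A10 : ∀ C D, Check C → positive C → Deliver D → lt C D → lt (ρ C) D)
    (tri : E → E → Prop)
    (htri : ∀ X Y, tri X Y ↔
      (Check X ∧ ¬ positive X ∧ Deliver Y ∧ rn X < dn Y) ∨
      (Deliver X ∧ Check Y ∧ positive Y ∧ dn X = rn Y + 1))
    : ∀ X Y Z, tri X Y → tri Y Z → lt X Z := by
  intro X Y Z hXY hYZ
  rcases (htri X Y).1 hXY with ⟨hX, hXn, hY, hXYn⟩ | ⟨_, hY, hYp, _⟩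
  · rcases (htri Y Z).1 hYZ with ⟨hY', _⟩ | ⟨_, hZ, hZp, hYZn⟩
    · exact absurd ⟨hY, hY'⟩ (A4_dc Y)
    · have hne : X ≠ Z := by
        rintro rfl
        exact hXn hZp
      refine (A6_lin X Z (.inl hX) (.inl hZ) hne).resolve_right fun hZX => ?_
      obtain ⟨R, hR, hZR, hgap⟩ := A7_check Z hZ hZp
      have hRX : lt R X := by
        have hne' : R ≠ X := by
          rintro rfl
          exact A4_cr R ⟨hX, hR⟩
        exact (A6_lin R X (.inr hR) (.inl hX) hne').resolve_right
          fun h => hgap X (.inl hX) ⟨hZX, h⟩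
      -- `R` is counted by `rn X` but not by `rn Z`, and `rn X` counts all that `rn Z` does.
      have hlt : rn Z < rn X := by
        rw [A6_rn Z (.inl hZ), A6_rn X (.inl hX)]
        refine Set.ncard_lt_ncard ((Set.ssubset_iff_of_subset ?_).2
          ⟨R, ⟨hR, .inr hRX⟩, ?_⟩) ((A3 X).subset ?_)
        · rintro r ⟨hr, rfl | hrZ⟩
          · exact absurd ⟨hZ, hr⟩ (A4_cr r)
          · exact ⟨hr, .inr (A1_trans _ _ _ hrZ hZX)⟩
        · rintro ⟨_, rfl | hRZ⟩
          · exact A1_irr _ hZR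
          · exact A1_irr _ (A1_trans _ _ _ hRZ hZR)
        · rintro r ⟨_, rfl | hrX⟩ hXr
          · exact A1_irr _ hXr
          · exact A1_irr _ (A1_trans _ _ _ hrX hXr)
      omega
  · rcases (htri Y Z).1 hYZ with ⟨_, hYn, _⟩ | ⟨hY', _⟩
    · exact absurd hYp hYn
    · exact absurd ⟨hY', hY⟩ (A4_dc Y)
end

section
/- The relation <* has no cycles: there is no k ≥ 1 and no finite sequence of events X₁, X₂, …, X_{k+1} with Xᵢ <* X_{i+1} for all 1 ≤ i ≤ k and X_{k+1} = X₁. -/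
/-!
Acyclicity of `<* = < ∪ ⊲` follows from three facts.

* `X ⊲ Y` excludes `Y < X`: by (A9) for a negative check before a delivery, and by (A8), (A10) for a
  delivery before a positive check.
* `⊲ ∘ ⊲ ⊆ <`: such a composite leads from a negative check `X` to a positive check `Y` with
  `rn X ≤ rn Y`; if `Y < X`, the removal that follows `Y` would give `rn Y < rn X`.
* `< ∘ ⊲ ∘ < ⊆ <`: if `A < B ⊲ C < D` then `C < B` is excluded, so `A < D` by transitivity or by the
  interval order axiom.

Hence every `<*`-path reduces to one of the shapes `<`, `⊲`, `⊲<`, `<⊲`, `⊲<⊲`, and none of these can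
be closed up: after a rotation, a closed one would give `X < X`, or `X ⊲ Y` together with `Y < X`.
The combinatorial part is `not_transGen_self`.
-/

/-- Numbering by position in a strict order is strictly increasing: if `x < y` and some `P`-element `r`
is at most `y` but not at most `x`, then fewer `P`-elements lie weakly below `x` than below `y`. -/
theorem ncard_below_lt {E : Type*} {lt : E → E → Prop}
    (irr : ∀ X, ¬ lt X X) (trans : ∀ X Y Z, lt X Y → lt Y Z → lt X Z)
    (fin : ∀ A : E, {Y | ¬ lt A Y}.Finite) (P : E → Prop) {x y r : E}
    (hxy : lt x y) (hr : P r) (hry : r = y ∨ lt r y) (hrx : ¬ (r = x ∨ lt r x)) :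
    Set.ncard {r | P r ∧ (r = x ∨ lt r x)} < Set.ncard {r | P r ∧ (r = y ∨ lt r y)} := by
  apply Set.ncard_lt_ncard
  · refine (Set.ssubset_iff_of_subset ?_).2 ⟨r, ⟨hr, hry⟩, fun h => hrx h.2⟩
    rintro z ⟨hz, rfl | h⟩
    · exact ⟨hz, Or.inr hxy⟩
    · exact ⟨hz, Or.inr (trans _ _ _ h hxy)⟩
  · refine (fin y).subset ?_
    rintro z ⟨-, rfl | h⟩ h'
    · exact irr _ h'
    · exact irr _ (trans _ _ _ h h')

/-- In an interval order `lt`, a relation `tri` that never opposes `lt` and satisfies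
`tri ∘ tri ⊆ lt` can be added to `lt` without creating cycles. -/
theorem not_transGen_self {E : Type*} {lt tri : E → E → Prop}
    (irr : ∀ X, ¬ lt X X) (trans : ∀ X Y Z, lt X Y → lt Y Z → lt X Z)
    (interval : ∀ X₁ X₂ X₃ X₄, lt X₁ X₂ → lt X₃ X₄ → ¬ lt X₂ X₃ → ¬ lt X₃ X₂ → lt X₁ X₄)
    (not_rev : ∀ X Y, tri X Y → ¬ lt Y X)
    (tri_tri : ∀ X Y Z, tri X Y → tri Y Z → lt X Z) (X : E) :
    ¬ Relation.TransGen (fun A B => lt A B ∨ tri A B) X X := by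
  have ltl : ∀ A B C D, lt A B → tri B C → lt C D → lt A D := by
    intro A B C D h₁ h₂ h₃
    by_cases h : lt B C
    · exact trans _ _ _ (trans _ _ _ h₁ h) h₃
    · exact interval _ _ _ _ h₁ h₃ h (not_rev _ _ h₂)
  have key : ∀ Y, Relation.TransGen (fun A B => lt A B ∨ tri A B) X Y →
      lt X Y ∨ tri X Y ∨ (∃ A, tri X A ∧ lt A Y) ∨ (∃ A, lt X A ∧ tri A Y) ∨
        ∃ A B, tri X A ∧ lt A B ∧ tri B Y := by
    intro Y h
    induction h with
    | single h => tauto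
    | @tail Y Z _ hYZ ih =>
      rcases ih with h | h | ⟨A, h₁, h₂⟩ | ⟨A, h₁, h₂⟩ | ⟨A, B, h₁, h₂, h₃⟩ <;>
        rcases hYZ with h' | h'
      · exact Or.inl (trans _ _ _ h h')
      · exact Or.inr (Or.inr (Or.inr (Or.inl ⟨_, h, h'⟩)))
      · exact Or.inr (Or.inr (Or.inl ⟨_, h, h'⟩))
      · exact Or.inl (tri_tri _ _ _ h h')
      · exact Or.inr (Or.inr (Or.inl ⟨_, h₁, trans _ _ _ h₂ h'⟩))
      · exact Or.inr (Or.inr (Or.inr (Or.inr ⟨_, _, h₁, h₂, h'⟩)))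
      · exact Or.inl (ltl _ _ _ _ h₁ h₂ h')
      · exact Or.inl (trans _ _ _ h₁ (tri_tri _ _ _ h₂ h'))
      · exact Or.inr (Or.inr (Or.inl ⟨_, h₁, ltl _ _ _ _ h₂ h₃ h'⟩))
      · exact Or.inr (Or.inr (Or.inl ⟨_, h₁, trans _ _ _ h₂ (tri_tri _ _ _ h₃ h')⟩))
  intro h
  rcases key X h with h | h | ⟨A, h₁, h₂⟩ | ⟨A, h₁, h₂⟩ | ⟨A, B, h₁, h₂, h₃⟩
  · exact irr _ h
  · exact irr _ (tri_tri _ _ _ h h)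
  · exact not_rev _ _ h₁ h₂
  · exact not_rev _ _ h₂ h₁
  · exact irr _ (trans _ _ _ h₂ (tri_tri _ _ _ h₃ h₁))

theorem stmt_4 {E : Type*} (lt : E → E → Prop)
    (Deliver Check Remove positive : E → Prop)
    (dn rn : E → ℕ) (ρ : E → E)
    (A1_irr : ∀ X, ¬ lt X X)
    (A1_trans : ∀ X Y Z, lt X Y → lt Y Z → lt X Z)
    (A2 : ∀ X₁ X₂ X₃ X₄, lt X₁ X₂ → lt X₃ X₄ → ¬ lt X₂ X₃ → ¬ lt X₃ X₂ → lt X₁ X₄)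
    (A3 : ∀ A : E, {Y | ¬ lt A Y}.Finite)
    (A4_dc : ∀ X, ¬ (Deliver X ∧ Check X))
    (A4_dr : ∀ X, ¬ (Deliver X ∧ Remove X))
    (A4_cr : ∀ X, ¬ (Check X ∧ Remove X))
    (A5_lin : ∀ d₁ d₂, Deliver d₁ → Deliver d₂ → d₁ ≠ d₂ → lt d₁ d₂ ∨ lt d₂ d₁)
    (A5_dn : ∀ d, Deliver d → dn d = Set.ncard {d' | Deliver d' ∧ (d' = d ∨ lt d' d)})
    (A6_lin : ∀ x₁ x₂, Check x₁ ∨ Remove x₁ → Check x₂ ∨ Remove x₂ → x₁ ≠ x₂ → lt x₁ x₂ ∨ lt x₂ x₁)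
    (A6_rn : ∀ x, Check x ∨ Remove x → rn x = Set.ncard {r | Remove r ∧ (r = x ∨ lt r x)})
    (A7_check : ∀ C, Check C → positive C → ∃ R, Remove R ∧ lt C R ∧ ∀ X, Check X ∨ Remove X → ¬ (lt C X ∧ lt X R))
    (A7_rem : ∀ R, Remove R → ∃ C, Check C ∧ positive C ∧ lt C R ∧ ∀ X, Check X ∨ Remove X → ¬ (lt C X ∧ lt X R))
    (A8 : ∀ C, Check C → positive C → Deliver (ρ C) ∧ rn C < dn (ρ C))
    (A9 : ∀ D C, Deliver D → Check C → lt D C → rn C < dn D → positive C)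
    (A10 : ∀ C D, Check C → positive C → Deliver D → lt C D → lt (ρ C) D)
    (tri : E → E → Prop)
    (htri : ∀ X Y, tri X Y ↔
      (Check X ∧ ¬ positive X ∧ Deliver Y ∧ rn X < dn Y) ∨
      (Deliver X ∧ Check Y ∧ positive Y ∧ dn X = rn Y + 1))
    (lts : E → E → Prop)
    (hlts : ∀ X Y, lts X Y ↔ lt X Y ∨ tri X Y)
    : ¬ ∃ (k : ℕ) (X : ℕ → E), 1 ≤ k ∧
      (∀ i, 1 ≤ i → i ≤ k → lts (X i) (X (i + 1))) ∧ X (k + 1) = X 1 := by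
  have dn_lt : ∀ d d', Deliver d → Deliver d' → lt d d' → dn d < dn d' := by
    intro d d' hd hd' h
    rw [A5_dn d hd, A5_dn d' hd']
    refine ncard_below_lt A1_irr A1_trans A3 Deliver h hd' (Or.inl rfl) ?_
    rintro (rfl | h')
    · exact A1_irr _ h
    · exact A1_irr _ (A1_trans _ _ _ h h')
  have rn_lt : ∀ Y X, Check Y → positive Y → Check X → lt Y X → rn Y < rn X := by
    intro Y X hY hpos hX h
    obtain ⟨R, hR, hYR, hmin⟩ := A7_check Y hY hpos
    rw [A6_rn Y (Or.inl hY), A6_rn X (Or.inl hX)]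
    refine ncard_below_lt A1_irr A1_trans A3 Remove h hR (Or.inr ?_) ?_
    · have hne : R ≠ X := by
        rintro rfl
        exact A4_cr _ ⟨hX, hR⟩
      exact (A6_lin R X (Or.inr hR) (Or.inl hX) hne).resolve_right
        fun hXR => hmin X (Or.inl hX) ⟨h, hXR⟩
    · rintro (rfl | h')
      · exact A1_irr _ hYR
      · exact A1_irr _ (A1_trans _ _ _ hYR h')
  have not_rev : ∀ X Y, tri X Y → ¬ lt Y X := by
    intro X Y h hlt
    rcases (htri X Y).1 h with ⟨hX, hneg, hY, hn⟩ | ⟨hX, hY, hpos, hn⟩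
    · exact hneg (A9 Y X hY hX hlt hn)
    · obtain ⟨hρ, hrn⟩ := A8 Y hY hpos
      have := dn_lt _ _ hρ hX (A10 Y X hY hpos hX hlt)
      omega
  have tri_tri : ∀ X Y Z, tri X Y → tri Y Z → lt X Z := by
    intro X Y Z h h'
    rcases (htri X Y).1 h with ⟨hX, hneg, hY, hn⟩ | ⟨hX, hY, hpos, hn⟩ <;>
      rcases (htri Y Z).1 h' with ⟨hY', hneg', hZ, hn'⟩ | ⟨hY', hZ, hpos', hn'⟩
    · exact absurd ⟨hY, hY'⟩ (A4_dc Y)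
    · have hne : X ≠ Z := by
        rintro rfl
        exact hneg hpos'
      refine (A6_lin X Z (Or.inl hX) (Or.inl hZ) hne).resolve_right fun hZX => ?_
      have := rn_lt Z X hZ hpos' hX hZX
      omega
    · exact absurd hpos hneg'
    · exact absurd ⟨hY', hY⟩ (A4_dc Y)
  rintro ⟨k, X, hk, hstep, hcyc⟩
  have path : ∀ n, 1 ≤ n → n ≤ k →
      Relation.TransGen (fun A B => lt A B ∨ tri A B) (X 1) (X (n + 1)) := by
    intro n hn
    induction n, hn using Nat.le_induction with
    | base => exact fun h => .single ((hlts _ _).1 (hstep 1 le_rfl h))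
    | succ n hn ih =>
      exact fun h => (ih (by omega)).tail ((hlts _ _).1 (hstep (n + 1) (by omega) h))
  have hloop := path k hk le_rfl
  rw [hcyc] at hloop
  exact not_transGen_self A1_irr A1_trans A2 not_rev tri_tri _ hloop
end

section
/- There exists a strict total order ≺ on the events that extends <*, i.e., such that X <* Y implies X ≺ Y for all events X, Y. -/
/-!
The relation `<*` is acyclic because, writing `⊲` for `tri`, three local facts hold:

* `X ⊲ Y` and `Y < X` never occur together: for a negative check this is A9, and for a positive
  check `C` with `dn D = rn C + 1` and `C < D`, A10 would put `ρ(C)` strictly before `D` while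
  `dn (ρ C) ≥ dn D`.
* `< ∘ ⊲ ∘ <` is contained in `<`, by the interval-order axiom and the previous point.
* `⊲ ∘ ⊲` is contained in `<`: such a composite goes from a negative check `C` to a positive check
  `C'` with `rn C ≤ rn C'`, and `C' < C` would put the removal that follows `C'` before `C`.

By the last two facts, `< ∪ ⊲ ∪ (< ∘ ⊲) ∪ (⊲ ∘ <) ∪ (⊲ ∘ < ∘ ⊲)` contains every `<*`-path. It is
irreflexive, so it is a strict partial order (`exists_strictTotalOrder_of_comp`), and Szpilrajn's
theorem extends it to a strict total order (`exists_strictTotalOrder_extending`).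
-/

/-- Szpilrajn's theorem for strict orders. -/
theorem exists_strictTotalOrder_extending {E : Type*} (T : E → E → Prop)
    (irr : ∀ x, ¬ T x x) (tr : ∀ x y z, T x y → T y z → T x z) :
    ∃ prec : E → E → Prop, IsStrictTotalOrder E prec ∧ ∀ x y, T x y → prec x y := by
  have : IsPartialOrder E (fun x y => x = y ∨ T x y) :=
    { refl := fun x => Or.inl rfl
      trans := by
        rintro x y z (rfl | h) (rfl | h')
        · exact Or.inl rfl
        · exact Or.inr h'
        · exact Or.inr h
        · exact Or.inr (tr _ _ _ h h')
      antisymm := by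
        rintro x y (h | h) (h' | h')
        · exact h
        · exact h
        · exact h'.symm
        · exact (irr _ (tr _ _ _ h h')).elim }
  obtain ⟨s, hs, hle⟩ := extend_partialOrder (fun x y => x = y ∨ T x y)
  refine ⟨fun x y => s x y ∧ x ≠ y, ?_, fun x y h =>
    ⟨hle x y (Or.inr h), fun e => irr y (e ▸ h)⟩⟩
  exact
    { trichotomous := by
        intro x y h h'
        by_contra hne
        rcases hs.total x y with hxy | hxy
        · exact h ⟨hxy, hne⟩
        · exact h' ⟨hxy, Ne.symm hne⟩
      irrefl := fun x h => h.2 rfl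
      trans := fun x y z h h' => ⟨hs.trans _ _ _ h.1 h'.1, fun e => by
        subst e
        exact h.2 (hs.antisymm _ _ h.1 h'.1)⟩ }

/-- The composition laws `ltt` and `tt` reduce every path of `lt`- and `tri`-steps to one of the
five shapes `<`, `⊲`, `<⊲`, `⊲<`, `⊲<⊲`; `tri_irr` and `tri_lt` then exclude cycles. -/
theorem exists_strictTotalOrder_of_comp {E : Type*} (lt tri : E → E → Prop)
    (irr : ∀ x, ¬ lt x x) (tr : ∀ x y z, lt x y → lt y z → lt x z)
    (tri_irr : ∀ x, ¬ tri x x) (tri_lt : ∀ x y, tri x y → ¬ lt y x)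
    (ltt : ∀ x y z w, lt x y → tri y z → lt z w → lt x w)
    (tt : ∀ x y z, tri x y → tri y z → lt x z) :
    ∃ prec : E → E → Prop, IsStrictTotalOrder E prec ∧
      ∀ x y, lt x y ∨ tri x y → prec x y := by
  let T : E → E → Prop := fun x y =>
    lt x y ∨ tri x y ∨ (∃ u, lt x u ∧ tri u y) ∨ (∃ u, tri x u ∧ lt u y) ∨
      ∃ u v, tri x u ∧ lt u v ∧ tri v y
  have T_lt : ∀ x y z, T x y → lt y z → T x z := by
    rintro x y z (h | h | ⟨u, h₁, h₂⟩ | ⟨u, h₁, h₂⟩ | ⟨u, v, h₁, h₂, h₃⟩) hz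
    · exact Or.inl (tr _ _ _ h hz)
    · exact Or.inr (Or.inr (Or.inr (Or.inl ⟨y, h, hz⟩)))
    · exact Or.inl (ltt _ _ _ _ h₁ h₂ hz)
    · exact Or.inr (Or.inr (Or.inr (Or.inl ⟨u, h₁, tr _ _ _ h₂ hz⟩)))
    · exact Or.inr (Or.inr (Or.inr (Or.inl ⟨u, h₁, ltt _ _ _ _ h₂ h₃ hz⟩)))
  have T_tri : ∀ x y z, T x y → tri y z → T x z := by
    rintro x y z (h | h | ⟨u, h₁, h₂⟩ | ⟨u, h₁, h₂⟩ | ⟨u, v, h₁, h₂, h₃⟩) hz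
    · exact Or.inr (Or.inr (Or.inl ⟨y, h, hz⟩))
    · exact Or.inl (tt _ _ _ h hz)
    · exact Or.inl (tr _ _ _ h₁ (tt _ _ _ h₂ hz))
    · exact Or.inr (Or.inr (Or.inr (Or.inr ⟨u, y, h₁, h₂, hz⟩)))
    · exact Or.inr (Or.inr (Or.inr (Or.inl ⟨u, h₁, tr _ _ _ h₂ (tt _ _ _ h₃ hz)⟩)))
  obtain ⟨prec, hp, hT⟩ := exists_strictTotalOrder_extending T
    (by
      rintro x (h | h | ⟨u, h₁, h₂⟩ | ⟨u, h₁, h₂⟩ | ⟨u, v, h₁, h₂, h₃⟩)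
      · exact irr _ h
      · exact tri_irr _ h
      · exact tri_lt _ _ h₂ h₁
      · exact tri_lt _ _ h₁ h₂
      -- Rotating the cycle `x ⊲ u < v ⊲ x` brings the two `⊲`-steps together: `v < u < v`.
      · exact irr _ (tr _ _ _ h₂ (tt _ _ _ h₃ h₁)))
    (by
      rintro x y z h (h' | h' | ⟨u, h₁, h₂⟩ | ⟨u, h₁, h₂⟩ | ⟨u, v, h₁, h₂, h₃⟩)
      · exact T_lt _ _ _ h h'
      · exact T_tri _ _ _ h h'
      · exact T_tri _ _ _ (T_lt _ _ _ h h₁) h₂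
      · exact T_lt _ _ _ (T_tri _ _ _ h h₁) h₂
      · exact T_tri _ _ _ (T_lt _ _ _ (T_tri _ _ _ h h₁) h₂) h₃)
  exact ⟨prec, hp, fun x y h => hT x y (h.imp id Or.inl)⟩

/-- Counting the `P`-events up to and including `x` gives a number that increases strictly from `x`
to a later `P`-event `y`. -/
theorem ncard_upTo_lt {E : Type*} (lt : E → E → Prop) (P : E → Prop)
    (irr : ∀ x, ¬ lt x x) (tr : ∀ x y z, lt x y → lt y z → lt x z)
    (fin : ∀ a : E, {y | ¬ lt a y}.Finite) {x y : E} (hxy : lt x y) (hy : P y) :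
    Set.ncard {z | P z ∧ (z = x ∨ lt z x)} < Set.ncard {z | P z ∧ (z = y ∨ lt z y)} := by
  refine Set.ncard_lt_ncard ?_ ((fin y).subset ?_)
  · refine (Set.ssubset_iff_of_subset ?_).2 ⟨y, ⟨hy, Or.inl rfl⟩, ?_⟩
    · rintro z ⟨hz, rfl | h⟩
      · exact ⟨hz, Or.inr hxy⟩
      · exact ⟨hz, Or.inr (tr _ _ _ h hxy)⟩
    · rintro ⟨-, rfl | h⟩
      · exact irr _ hxy
      · exact irr _ (tr _ _ _ h hxy)
  · rintro z ⟨-, rfl | h⟩ h'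
    · exact irr _ h'
    · exact irr _ (tr _ _ _ h h')

theorem stmt_5 {E : Type*} (lt : E → E → Prop)
    (Deliver Check Remove positive : E → Prop)
    (dn rn : E → ℕ) (ρ : E → E)
    (A1_irr : ∀ X, ¬ lt X X)
    (A1_trans : ∀ X Y Z, lt X Y → lt Y Z → lt X Z)
    (A2 : ∀ X₁ X₂ X₃ X₄, lt X₁ X₂ → lt X₃ X₄ → ¬ lt X₂ X₃ → ¬ lt X₃ X₂ → lt X₁ X₄)
    (A3 : ∀ A : E, {Y | ¬ lt A Y}.Finite)
    (A4_dc : ∀ X, ¬ (Deliver X ∧ Check X))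
    (A4_dr : ∀ X, ¬ (Deliver X ∧ Remove X))
    (A4_cr : ∀ X, ¬ (Check X ∧ Remove X))
    (A5_lin : ∀ d₁ d₂, Deliver d₁ → Deliver d₂ → d₁ ≠ d₂ → lt d₁ d₂ ∨ lt d₂ d₁)
    (A5_dn : ∀ d, Deliver d → dn d = Set.ncard {d' | Deliver d' ∧ (d' = d ∨ lt d' d)})
    (A6_lin : ∀ x₁ x₂, Check x₁ ∨ Remove x₁ → Check x₂ ∨ Remove x₂ → x₁ ≠ x₂ → lt x₁ x₂ ∨ lt x₂ x₁)
    (A6_rn : ∀ x, Check x ∨ Remove x → rn x = Set.ncard {r | Remove r ∧ (r = x ∨ lt r x)})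
    (A7_check : ∀ C, Check C → positive C → ∃ R, Remove R ∧ lt C R ∧ ∀ X, Check X ∨ Remove X → ¬ (lt C X ∧ lt X R))
    (A7_rem : ∀ R, Remove R → ∃ C, Check C ∧ positive C ∧ lt C R ∧ ∀ X, Check X ∨ Remove X → ¬ (lt C X ∧ lt X R))
    (A8 : ∀ C, Check C → positive C → Deliver (ρ C) ∧ rn C < dn (ρ C))
    (A9 : ∀ D C, Deliver D → Check C → lt D C → rn C < dn D → positive C)
    (A10 : ∀ C D, Check C → positive C → Deliver D → lt C D → lt (ρ C) D)
    (tri : E → E → Prop)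
    (htri : ∀ X Y, tri X Y ↔
      (Check X ∧ ¬ positive X ∧ Deliver Y ∧ rn X < dn Y) ∨
      (Deliver X ∧ Check Y ∧ positive Y ∧ dn X = rn Y + 1))
    (lts : E → E → Prop)
    (hlts : ∀ X Y, lts X Y ↔ lt X Y ∨ tri X Y)
    : ∃ prec : E → E → Prop, IsStrictTotalOrder E prec ∧ ∀ X Y, lts X Y → prec X Y := by
  have dn_lt : ∀ d d', Deliver d → Deliver d' → lt d d' → dn d < dn d' := by
    intro d d' hd hd' h
    rw [A5_dn d hd, A5_dn d' hd']
    exact ncard_upTo_lt lt Deliver A1_irr A1_trans A3 h hd'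
  have rn_lt : ∀ x r, Check x ∨ Remove x → Remove r → lt x r → rn x < rn r := by
    intro x r hx hr h
    rw [A6_rn x hx, A6_rn r (Or.inr hr)]
    exact ncard_upTo_lt lt Remove A1_irr A1_trans A3 h hr
  have rn_le : ∀ r c, Remove r → Check c → lt r c → rn r ≤ rn c := by
    intro r c hr hc h
    rw [A6_rn r (Or.inr hr), A6_rn c (Or.inl hc)]
    refine Set.ncard_le_ncard ?_ ((A3 c).subset ?_)
    · rintro z ⟨hz, rfl | h'⟩
      · exact ⟨hz, Or.inr h⟩
      · exact ⟨hz, Or.inr (A1_trans _ _ _ h' h)⟩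
    · rintro z ⟨-, rfl | h'⟩ h''
      · exact A1_irr _ h''
      · exact A1_irr _ (A1_trans _ _ _ h' h'')
  have tri_lt : ∀ x y, tri x y → ¬ lt y x := by
    intro x y h hyx
    rcases (htri x y).1 h with ⟨hx, hneg, hy, hlt⟩ | ⟨hx, hy, hpos, heq⟩
    · exact hneg (A9 y x hy hx hyx hlt)
    · obtain ⟨hρ, hr⟩ := A8 y hy hpos
      have := dn_lt _ _ hρ hx (A10 y x hy hpos hx hyx)
      omega
  have tt : ∀ x y z, tri x y → tri y z → lt x z := by
    intro x y z hxy hyz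
    rcases (htri x y).1 hxy with ⟨hx, hneg, hy, hlt⟩ | ⟨hx, hy, hpos, heq⟩
    · rcases (htri y z).1 hyz with ⟨hy', -⟩ | ⟨-, hz, hpos, heq⟩
      · exact (A4_dc y ⟨hy, hy'⟩).elim
      · rcases A6_lin x z (Or.inl hx) (Or.inl hz) (fun e => hneg (e ▸ hpos)) with h | h
        · exact h
        · exfalso
          obtain ⟨R, hR, hzR, hno⟩ := A7_check z hz hpos
          -- No homeowner event lies between `z` and `R`, so `z < x` forces `R < x`.
          have hRx : lt R x := by
            rcases A6_lin R x (Or.inr hR) (Or.inl hx) (fun e => A4_cr x ⟨hx, e ▸ hR⟩) with h' | h'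
            · exact h'
            · exact (hno x (Or.inl hx) ⟨h, h'⟩).elim
          have h₁ := rn_lt z R (Or.inl hz) hR hzR
          have h₂ := rn_le R x hR hx hRx
          omega
    · rcases (htri y z).1 hyz with ⟨-, hneg, -⟩ | ⟨hy', -⟩
      · exact (hneg hpos).elim
      · exact (A4_dc y ⟨hy', hy⟩).elim
  obtain ⟨prec, hp, h⟩ := exists_strictTotalOrder_of_comp lt tri A1_irr A1_trans
    (by
      intro x h
      rcases (htri x x).1 h with ⟨hx, -, hx', -⟩ | ⟨hx', hx, -⟩
      · exact A4_dc x ⟨hx', hx⟩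
      · exact A4_dc x ⟨hx', hx⟩)
    tri_lt
    (by
      intro x y z w hxy hyz hzw
      by_cases h : lt y z
      · exact A1_trans _ _ _ hxy (A1_trans _ _ _ h hzw)
      · exact A2 x y z w hxy hzw h (tri_lt _ _ hyz))
    tt
  exact ⟨prec, hp, fun X Y hXY => h X Y ((hlts X Y).1 hXY)⟩
end

section
/- Let ≺ be any strict total order on the events extending <*. Then for every Remove event R there is a positive Check event C with C ≺ R such that there is no Check or Remove event X with C ≺ X ≺ R. -/
theorem stmt_7 {E : Type*} (lt : E → E → Prop)
    (Deliver Check Remove positive : E → Prop)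
    (dn rn : E → ℕ) (ρ : E → E)
    (A1_irr : ∀ X, ¬ lt X X)
    (A1_trans : ∀ X Y Z, lt X Y → lt Y Z → lt X Z)
    (A2 : ∀ X₁ X₂ X₃ X₄, lt X₁ X₂ → lt X₃ X₄ → ¬ lt X₂ X₃ → ¬ lt X₃ X₂ → lt X₁ X₄)
    (A3 : ∀ A : E, {Y | ¬ lt A Y}.Finite)
    (A4_dc : ∀ X, ¬ (Deliver X ∧ Check X))
    (A4_dr : ∀ X, ¬ (Deliver X ∧ Remove X))
    (A4_cr : ∀ X, ¬ (Check X ∧ Remove X))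
    (A5_lin : ∀ d₁ d₂, Deliver d₁ → Deliver d₂ → d₁ ≠ d₂ → lt d₁ d₂ ∨ lt d₂ d₁)
    (A5_dn : ∀ d, Deliver d → dn d = Set.ncard {d' | Deliver d' ∧ (d' = d ∨ lt d' d)})
    (A6_lin : ∀ x₁ x₂, Check x₁ ∨ Remove x₁ → Check x₂ ∨ Remove x₂ → x₁ ≠ x₂ → lt x₁ x₂ ∨ lt x₂ x₁)
    (A6_rn : ∀ x, Check x ∨ Remove x → rn x = Set.ncard {r | Remove r ∧ (r = x ∨ lt r x)})
    (A7_check : ∀ C, Check C → positive C → ∃ R, Remove R ∧ lt C R ∧ ∀ X, Check X ∨ Remove X → ¬ (lt C X ∧ lt X R))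
    (A7_rem : ∀ R, Remove R → ∃ C, Check C ∧ positive C ∧ lt C R ∧ ∀ X, Check X ∨ Remove X → ¬ (lt C X ∧ lt X R))
    (A8 : ∀ C, Check C → positive C → Deliver (ρ C) ∧ rn C < dn (ρ C))
    (A9 : ∀ D C, Deliver D → Check C → lt D C → rn C < dn D → positive C)
    (A10 : ∀ C D, Check C → positive C → Deliver D → lt C D → lt (ρ C) D)
    (tri : E → E → Prop)
    (htri : ∀ X Y, tri X Y ↔
      (Check X ∧ ¬ positive X ∧ Deliver Y ∧ rn X < dn Y) ∨
      (Deliver X ∧ Check Y ∧ positive Y ∧ dn X = rn Y + 1))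
    (lts : E → E → Prop)
    (hlts : ∀ X Y, lts X Y ↔ lt X Y ∨ tri X Y)
    (prec : E → E → Prop)
    (hsto : IsStrictTotalOrder E prec)
    (hext : ∀ X Y, lts X Y → prec X Y)
    : ∀ R, Remove R → ∃ C, Check C ∧ positive C ∧ prec C R ∧
      ¬ ∃ X, (Check X ∨ Remove X) ∧ prec C X ∧ prec X R := by
  -- Homeowner events are linearly ordered by `lt`, and `prec` extends `lt`, so the two
  -- relations agree on them; the gap-free check event for `lt` is also one for `prec`.
  have agree : ∀ X Y, Check X ∨ Remove X → Check Y ∨ Remove Y → prec X Y → lt X Y := by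
    intro X Y hX hY h
    have hne : X ≠ Y := by
      rintro rfl
      exact irrefl_of prec X h
    exact (A6_lin X Y hX hY hne).resolve_right fun h' =>
      irrefl_of prec X (trans_of prec h (hext Y X ((hlts Y X).2 (Or.inl h'))))
  intro R hR
  obtain ⟨C, hC, hpos, hCR, hgap⟩ := A7_rem R hR
  refine ⟨C, hC, hpos, hext C R ((hlts C R).2 (Or.inl hCR)), ?_⟩
  rintro ⟨X, hX, hCX, hXR⟩
  exact hgap X hX ⟨agree C X (Or.inl hC) hX hCX, agree X R hX (Or.inr hR) hXR⟩
end

section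
/- Let ≺ be any strict total order on the events extending <*. Then for every Check event C: C is positive if and only if remnum(C) < delnum(C). -/
/-!
Checks and removals are linearly ordered by `<`, so every linear extension agrees with `<` on them
and `remnum(C) = rn(C)`. The deliveries form an initial segment of a sequence numbered
`1, 2, 3, …` by `dn`, so the comparison of `rn(C)` with `delnum(C)` reduces to knowing which
deliveries precede `C`.

If `C` is negative, every delivery numbered above `rn(C)` comes after `C` by the first clause of
`⊲`, so at most `rn(C)` deliveries precede `C`. If `C` is positive, the delivery `ρ(C)` has a number
above `rn(C)`, hence there is a delivery `D` numbered exactly `rn(C) + 1`; the second clause of `⊲`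
puts `D`, and with it the `rn(C) + 1` deliveries up to `D`, before `C`.
-/

theorem stmt_8 {E : Type*} (lt : E → E → Prop)
    (Deliver Check Remove positive : E → Prop)
    (dn rn : E → ℕ) (ρ : E → E)
    (A1_irr : ∀ X, ¬ lt X X)
    (A1_trans : ∀ X Y Z, lt X Y → lt Y Z → lt X Z)
    (A2 : ∀ X₁ X₂ X₃ X₄, lt X₁ X₂ → lt X₃ X₄ → ¬ lt X₂ X₃ → ¬ lt X₃ X₂ → lt X₁ X₄)
    (A3 : ∀ A : E, {Y | ¬ lt A Y}.Finite)
    (A4_dc : ∀ X, ¬ (Deliver X ∧ Check X))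
    (A4_dr : ∀ X, ¬ (Deliver X ∧ Remove X))
    (A4_cr : ∀ X, ¬ (Check X ∧ Remove X))
    (A5_lin : ∀ d₁ d₂, Deliver d₁ → Deliver d₂ → d₁ ≠ d₂ → lt d₁ d₂ ∨ lt d₂ d₁)
    (A5_dn : ∀ d, Deliver d → dn d = Set.ncard {d' | Deliver d' ∧ (d' = d ∨ lt d' d)})
    (A6_lin : ∀ x₁ x₂, Check x₁ ∨ Remove x₁ → Check x₂ ∨ Remove x₂ → x₁ ≠ x₂ → lt x₁ x₂ ∨ lt x₂ x₁)
    (A6_rn : ∀ x, Check x ∨ Remove x → rn x = Set.ncard {r | Remove r ∧ (r = x ∨ lt r x)})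
    (A7_check : ∀ C, Check C → positive C → ∃ R, Remove R ∧ lt C R ∧ ∀ X, Check X ∨ Remove X → ¬ (lt C X ∧ lt X R))
    (A7_rem : ∀ R, Remove R → ∃ C, Check C ∧ positive C ∧ lt C R ∧ ∀ X, Check X ∨ Remove X → ¬ (lt C X ∧ lt X R))
    (A8 : ∀ C, Check C → positive C → Deliver (ρ C) ∧ rn C < dn (ρ C))
    (A9 : ∀ D C, Deliver D → Check C → lt D C → rn C < dn D → positive C)
    (A10 : ∀ C D, Check C → positive C → Deliver D → lt C D → lt (ρ C) D)
    (tri : E → E → Prop)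
    (htri : ∀ X Y, tri X Y ↔
      (Check X ∧ ¬ positive X ∧ Deliver Y ∧ rn X < dn Y) ∨
      (Deliver X ∧ Check Y ∧ positive Y ∧ dn X = rn Y + 1))
    (lts : E → E → Prop)
    (hlts : ∀ X Y, lts X Y ↔ lt X Y ∨ tri X Y)
    (prec : E → E → Prop)
    (hsto : IsStrictTotalOrder E prec)
    (hext : ∀ X Y, lts X Y → prec X Y)
    : ∀ C, Check C →
      (positive C ↔ Set.ncard {R | Remove R ∧ prec R C} < Set.ncard {D | Deliver D ∧ prec D C}) := by
  intro C hC
  have irr : ∀ X, ¬ prec X X := hsto.toIrrefl.irrefl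
  have tr : ∀ X Y Z, prec X Y → prec Y Z → prec X Z := hsto.toIsTrans.trans
  have lp : ∀ X Y, lt X Y → prec X Y := fun X Y h => hext X Y ((hlts X Y).2 (Or.inl h))
  have not_lt_of_prec : ∀ X Y, prec X Y → ¬ lt Y X := fun X Y h h' =>
    irr X (tr _ _ _ h (lp _ _ h'))
  have hrem : Set.ncard {R | Remove R ∧ prec R C} = rn C := by
    rw [A6_rn C (Or.inl hC)]
    congr 1
    ext R
    constructor
    · rintro ⟨hR, h⟩
      refine ⟨hR, ?_⟩
      by_cases he : R = C
      · exact Or.inl he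
      · rcases A6_lin R C (Or.inr hR) (Or.inl hC) he with h' | h'
        · exact Or.inr h'
        · exact absurd h' (not_lt_of_prec _ _ h)
    · rintro ⟨hR, rfl | h⟩
      · exact absurd ⟨hC, hR⟩ (A4_cr R)
      · exact ⟨hR, lp _ _ h⟩
  -- The initial segment of deliveries up to `d` is finite: it avoids the cofinite set above `d`.
  have fin : ∀ d, {d' | Deliver d' ∧ (d' = d ∨ lt d' d)}.Finite := by
    intro d
    refine (A3 d).subset ?_
    rintro x ⟨-, rfl | h⟩
    · exact A1_irr x
    · exact fun h' => A1_irr d (A1_trans _ _ _ h' h)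
  have dn_pos : ∀ d, Deliver d → 1 ≤ dn d := by
    intro d hd
    rw [A5_dn d hd]
    exact (Set.ncard_pos (fin d)).2 ⟨d, hd, Or.inl rfl⟩
  have dn_mono : ∀ d₁ d₂, Deliver d₁ → Deliver d₂ → lt d₁ d₂ → dn d₁ < dn d₂ := by
    intro d₁ d₂ h₁ h₂ h
    rw [A5_dn d₁ h₁, A5_dn d₂ h₂]
    refine Set.ncard_lt_ncard ⟨?_, fun hs => ?_⟩ (fin d₂)
    · rintro x ⟨hx, rfl | h'⟩
      · exact ⟨hx, Or.inr h⟩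
      · exact ⟨hx, Or.inr (A1_trans _ _ _ h' h)⟩
    · rcases (hs ⟨h₂, Or.inl rfl⟩ :
        d₂ ∈ {d' | Deliver d' ∧ (d' = d₁ ∨ lt d' d₁)}).2 with rfl | h'
      · exact A1_irr _ h
      · exact A1_irr _ (A1_trans _ _ _ h h')
  have dn_inj : Set.InjOn dn {d | Deliver d} := by
    intro a ha b hb hab
    by_contra hne
    rcases A5_lin a b ha hb hne with h | h
    · exact (dn_mono a b ha hb h).ne hab
    · exact (dn_mono b a hb ha h).ne hab.symm
  rw [hrem]
  constructor
  · intro hp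
    obtain ⟨hd, hlt⟩ := A8 C hC hp
    -- `dn` is injective from the `dn d` deliveries up to `d = ρ C` into `{1, …, dn d}`,
    -- hence takes every value there.
    have himg : dn '' {d' | Deliver d' ∧ (d' = ρ C ∨ lt d' (ρ C))} = Set.Icc 1 (dn (ρ C)) := by
      refine Set.eq_of_subset_of_ncard_le ?_ ?_ (Set.finite_Icc _ _)
      · rintro _ ⟨x, ⟨hx, rfl | h⟩, rfl⟩
        · exact ⟨dn_pos _ hx, le_rfl⟩
        · exact ⟨dn_pos _ hx, (dn_mono _ _ hx hd h).le⟩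
      · rw [Set.ncard_image_of_injOn (dn_inj.mono fun x hx => hx.1), ← A5_dn _ hd]
        simp [Set.ncard_eq_toFinset_card']
    have hmem : rn C + 1 ∈ Set.Icc 1 (dn (ρ C)) := ⟨by omega, hlt⟩
    rw [← himg] at hmem
    obtain ⟨D, ⟨hD, -⟩, hDn⟩ := hmem
    have hDC : prec D C :=
      hext _ _ ((hlts _ _).2 (Or.inr ((htri _ _).2 (Or.inr ⟨hD, hC, hp, hDn⟩))))
    have hfin : {D | Deliver D ∧ prec D C}.Finite :=
      (A3 C).subset fun x hx => not_lt_of_prec _ _ hx.2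
    have hle : dn D ≤ Set.ncard {D | Deliver D ∧ prec D C} := by
      rw [A5_dn D hD]
      refine Set.ncard_le_ncard ?_ hfin
      rintro x ⟨hx, rfl | h⟩
      · exact ⟨hx, hDC⟩
      · exact ⟨hx, tr _ _ _ (lp _ _ h) hDC⟩
    omega
  · intro hlt
    by_contra hn
    have hle : Set.ncard {D | Deliver D ∧ prec D C} ≤ (Set.Icc 1 (rn C)).ncard := by
      refine Set.ncard_le_ncard_of_injOn dn ?_ (dn_inj.mono fun x hx => hx.1) (Set.finite_Icc _ _)
      rintro x ⟨hx, hxC⟩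
      refine ⟨dn_pos x hx, ?_⟩
      by_contra hgt
      have hCx : prec C x := hext _ _ ((hlts _ _).2
        (Or.inr ((htri _ _).2 (Or.inl ⟨hC, hn, hx, not_le.1 hgt⟩))))
      exact irr _ (tr _ _ _ hCx hxC)
    have hcard : (Set.Icc 1 (rn C)).ncard = rn C := by simp [Set.ncard_eq_toFinset_card']
    omega
end

section
/- Let ≺ be any strict total order on the events extending <*. Then for every negative Check event C, delnum(C) ≤ remnum(C). -/
/-!
A negative `Check` event `C` satisfies `C ⊲ D` for each `Deliver` event `D` with `rn C < dn D`, so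
only deliveries with `dn D ≤ rn C` can precede `C` in an extending order. Deliveries are numbered
injectively from `1`, hence at most `rn C` of them precede `C`. As homeowner events are linearly
ordered by `<`, the `Remove` events preceding `C` in the extending order are exactly those below `C`
for `<`, and their number is `rn C`.
-/

theorem stmt_9 {E : Type*} (lt : E → E → Prop)
    (Deliver Check Remove positive : E → Prop)
    (dn rn : E → ℕ) (ρ : E → E)
    (A1_irr : ∀ X, ¬ lt X X)
    (A1_trans : ∀ X Y Z, lt X Y → lt Y Z → lt X Z)
    (A2 : ∀ X₁ X₂ X₃ X₄, lt X₁ X₂ → lt X₃ X₄ → ¬ lt X₂ X₃ → ¬ lt X₃ X₂ → lt X₁ X₄)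
    (A3 : ∀ A : E, {Y | ¬ lt A Y}.Finite)
    (A4_dc : ∀ X, ¬ (Deliver X ∧ Check X))
    (A4_dr : ∀ X, ¬ (Deliver X ∧ Remove X))
    (A4_cr : ∀ X, ¬ (Check X ∧ Remove X))
    (A5_lin : ∀ d₁ d₂, Deliver d₁ → Deliver d₂ → d₁ ≠ d₂ → lt d₁ d₂ ∨ lt d₂ d₁)
    (A5_dn : ∀ d, Deliver d → dn d = Set.ncard {d' | Deliver d' ∧ (d' = d ∨ lt d' d)})
    (A6_lin : ∀ x₁ x₂, Check x₁ ∨ Remove x₁ → Check x₂ ∨ Remove x₂ → x₁ ≠ x₂ → lt x₁ x₂ ∨ lt x₂ x₁)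
    (A6_rn : ∀ x, Check x ∨ Remove x → rn x = Set.ncard {r | Remove r ∧ (r = x ∨ lt r x)})
    (A7_check : ∀ C, Check C → positive C → ∃ R, Remove R ∧ lt C R ∧ ∀ X, Check X ∨ Remove X → ¬ (lt C X ∧ lt X R))
    (A7_rem : ∀ R, Remove R → ∃ C, Check C ∧ positive C ∧ lt C R ∧ ∀ X, Check X ∨ Remove X → ¬ (lt C X ∧ lt X R))
    (A8 : ∀ C, Check C → positive C → Deliver (ρ C) ∧ rn C < dn (ρ C))
    (A9 : ∀ D C, Deliver D → Check C → lt D C → rn C < dn D → positive C)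
    (A10 : ∀ C D, Check C → positive C → Deliver D → lt C D → lt (ρ C) D)
    (tri : E → E → Prop)
    (htri : ∀ X Y, tri X Y ↔
      (Check X ∧ ¬ positive X ∧ Deliver Y ∧ rn X < dn Y) ∨
      (Deliver X ∧ Check Y ∧ positive Y ∧ dn X = rn Y + 1))
    (lts : E → E → Prop)
    (hlts : ∀ X Y, lts X Y ↔ lt X Y ∨ tri X Y)
    (prec : E → E → Prop)
    (hsto : IsStrictTotalOrder E prec)
    (hext : ∀ X Y, lts X Y → prec X Y)
    : ∀ C, Check C → ¬ positive C →
      Set.ncard {D | Deliver D ∧ prec D C} ≤ Set.ncard {R | Remove R ∧ prec R C} := by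
  intro C hC hneg
  have asymm : ∀ X Y, prec X Y → ¬ prec Y X := fun X Y h h' =>
    hsto.irrefl X (hsto.trans X Y X h h')
  have rem_eq : {R | Remove R ∧ prec R C} = {r | Remove r ∧ (r = C ∨ lt r C)} := by
    ext R
    constructor
    · rintro ⟨hR, hp⟩
      refine ⟨hR, ?_⟩
      by_cases hRC : R = C
      · exact Or.inl hRC
      · rcases A6_lin R C (Or.inr hR) (Or.inl hC) hRC with h | h
        · exact Or.inr h
        · exact absurd (hext C R ((hlts C R).2 (Or.inl h))) (asymm R C hp)
    · rintro ⟨hR, rfl | h⟩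
      · exact absurd ⟨hC, hR⟩ (A4_cr R)
      · exact ⟨hR, hext R C ((hlts R C).2 (Or.inl h))⟩
  rw [rem_eq, ← A6_rn C (Or.inl hC)]
  -- Finiteness keeps `Set.ncard` from taking its junk value `0` on infinite sets.
  have fin : ∀ d, {d' | Deliver d' ∧ (d' = d ∨ lt d' d)}.Finite := by
    intro d
    refine (A3 d).subset ?_
    rintro x ⟨-, rfl | h⟩
    · exact A1_irr x
    · exact fun h' => A1_irr d (A1_trans _ _ _ h' h)
  have dn_lt : ∀ d₁ d₂, Deliver d₁ → Deliver d₂ → lt d₁ d₂ → dn d₁ < dn d₂ := by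
    intro d₁ d₂ h₁ h₂ h
    rw [A5_dn d₁ h₁, A5_dn d₂ h₂]
    refine Set.ncard_lt_ncard ⟨?_, fun hsub => ?_⟩ (fin d₂)
    · rintro x ⟨hx, rfl | hxd⟩
      · exact ⟨hx, Or.inr h⟩
      · exact ⟨hx, Or.inr (A1_trans _ _ _ hxd h)⟩
    · rcases (hsub ⟨h₂, Or.inl rfl⟩ : Deliver d₂ ∧ (d₂ = d₁ ∨ lt d₂ d₁)).2 with e | h'
      · exact A1_irr d₁ (e ▸ h)
      · exact A1_irr d₁ (A1_trans _ _ _ h h')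
  have dn_pos : ∀ d, Deliver d → 1 ≤ dn d := by
    intro d hd
    rw [A5_dn d hd]
    exact (Set.ncard_pos (fin d)).2 ⟨d, hd, Or.inl rfl⟩
  have key := Set.ncard_le_ncard_of_injOn (s := {D | Deliver D ∧ prec D C})
    (t := (Finset.Icc 1 (rn C) : Set ℕ)) dn ?_ ?_ (Finset.finite_toSet _)
  · simpa [Set.ncard_coe_finset] using key
  · rintro D ⟨hD, hp⟩
    refine Finset.mem_coe.2 (Finset.mem_Icc.2 ⟨dn_pos D hD, ?_⟩)
    by_contra! hlt
    exact asymm D C hp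
      (hext C D ((hlts C D).2 (Or.inr ((htri C D).2 (Or.inl ⟨hC, hneg, hD, hlt⟩)))))
  · rintro d₁ ⟨h₁, -⟩ d₂ ⟨h₂, -⟩ he
    by_contra hne
    rcases A5_lin d₁ d₂ h₁ h₂ hne with h | h
    · exact (dn_lt _ _ h₁ h₂ h).ne he
    · exact (dn_lt _ _ h₂ h₁ h).ne he.symm
end

section
/- Let ≺ be any strict total order on the events extending <*. Then for every positive Check event C, remnum(C) < delnum(C). -/
/-!
On homeowner events every linear extension agrees with `lt`, so `remnum C = rn C`. The delivery
numbers count initial segments of a linear order, hence the deliveries up to `ρ C` carry exactly the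
numbers `1, …, dn (ρ C)` (`exists_deliver_dn_eq`). As `rn C < dn (ρ C)`, some delivery `d` has
`dn d = rn C + 1`; then `d ⊲ C`, so `d` and the deliveries before it, `rn C + 1` events in all,
precede `C`.
-/

/-- Delivery numbers have no gaps: below any delivery number `dn D`, every positive number is
attained. The numbering is strictly monotone into `1, …, dn D`, and its domain (the deliveries
up to `D`) has exactly `dn D` elements. -/
theorem exists_deliver_dn_eq {E : Type*} (lt : E → E → Prop) (Deliver : E → Prop) (dn : E → ℕ)
    (irr : ∀ X, ¬ lt X X) (trans : ∀ X Y Z, lt X Y → lt Y Z → lt X Z)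
    (fin : ∀ A : E, {Y | ¬ lt A Y}.Finite)
    (lin : ∀ d₁ d₂, Deliver d₁ → Deliver d₂ → d₁ ≠ d₂ → lt d₁ d₂ ∨ lt d₂ d₁)
    (hdn : ∀ d, Deliver d → dn d = Set.ncard {d' | Deliver d' ∧ (d' = d ∨ lt d' d)})
    (D : E) (hD : Deliver D) (k : ℕ) (hk : k < dn D) : ∃ d, Deliver d ∧ dn d = k + 1 := by
  have hfin : ∀ d, {d' | Deliver d' ∧ (d' = d ∨ lt d' d)}.Finite := by
    refine fun d => (fin d).subset ?_
    rintro x ⟨-, rfl | h⟩ h'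
    · exact irr _ h'
    · exact irr _ (trans _ _ _ h h')
  have hmono : ∀ a b, Deliver a → Deliver b → lt a b → dn a < dn b := by
    intro a b ha hb hab
    rw [hdn a ha, hdn b hb]
    refine Set.ncard_lt_ncard ((Set.ssubset_iff_of_subset ?_).2 ⟨b, ⟨hb, Or.inl rfl⟩, ?_⟩) (hfin b)
    · rintro x ⟨hx, rfl | h⟩
      · exact ⟨hx, Or.inr hab⟩
      · exact ⟨hx, Or.inr (trans _ _ _ h hab)⟩
    · rintro ⟨-, rfl | h⟩
      · exact irr _ hab
      · exact irr _ (trans _ _ _ h hab)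
  have hpos : ∀ d, Deliver d → 1 ≤ dn d := by
    intro d hd
    rw [hdn d hd]
    exact (Set.ncard_pos (hfin d)).2 ⟨d, hd, Or.inl rfl⟩
  have hinj : Set.InjOn dn {d' | Deliver d' ∧ (d' = D ∨ lt d' D)} := by
    intro a ha b hb hab
    by_contra hne
    rcases lin a b ha.1 hb.1 hne with h | h
    · exact (hmono a b ha.1 hb.1 h).ne hab
    · exact (hmono b a hb.1 ha.1 h).ne hab.symm
  have himg : dn '' {d' | Deliver d' ∧ (d' = D ∨ lt d' D)} = Set.Icc 1 (dn D) := by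
    refine Set.eq_of_subset_of_ncard_le ?_ ?_ (Set.finite_Icc _ _)
    · rintro _ ⟨x, ⟨hx, h⟩, rfl⟩
      refine ⟨hpos x hx, ?_⟩
      rcases h with rfl | h
      · exact le_rfl
      · exact (hmono x D hx hD h).le
    · rw [hinj.ncard_image, ← hdn D hD, ← Finset.coe_Icc, Set.ncard_coe_finset]
      simp
  have hmem : k + 1 ∈ Set.Icc 1 (dn D) := ⟨by omega, hk⟩
  rw [← himg] at hmem
  obtain ⟨d, hd, hdk⟩ := hmem
  exact ⟨d, hd.1, hdk⟩


theorem stmt_10 {E : Type*} (lt : E → E → Prop)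
    (Deliver Check Remove positive : E → Prop)
    (dn rn : E → ℕ) (ρ : E → E)
    (A1_irr : ∀ X, ¬ lt X X)
    (A1_trans : ∀ X Y Z, lt X Y → lt Y Z → lt X Z)
    (A2 : ∀ X₁ X₂ X₃ X₄, lt X₁ X₂ → lt X₃ X₄ → ¬ lt X₂ X₃ → ¬ lt X₃ X₂ → lt X₁ X₄)
    (A3 : ∀ A : E, {Y | ¬ lt A Y}.Finite)
    (A4_dc : ∀ X, ¬ (Deliver X ∧ Check X))
    (A4_dr : ∀ X, ¬ (Deliver X ∧ Remove X))
    (A4_cr : ∀ X, ¬ (Check X ∧ Remove X))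
    (A5_lin : ∀ d₁ d₂, Deliver d₁ → Deliver d₂ → d₁ ≠ d₂ → lt d₁ d₂ ∨ lt d₂ d₁)
    (A5_dn : ∀ d, Deliver d → dn d = Set.ncard {d' | Deliver d' ∧ (d' = d ∨ lt d' d)})
    (A6_lin : ∀ x₁ x₂, Check x₁ ∨ Remove x₁ → Check x₂ ∨ Remove x₂ → x₁ ≠ x₂ → lt x₁ x₂ ∨ lt x₂ x₁)
    (A6_rn : ∀ x, Check x ∨ Remove x → rn x = Set.ncard {r | Remove r ∧ (r = x ∨ lt r x)})
    (A7_check : ∀ C, Check C → positive C → ∃ R, Remove R ∧ lt C R ∧ ∀ X, Check X ∨ Remove X → ¬ (lt C X ∧ lt X R))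
    (A7_rem : ∀ R, Remove R → ∃ C, Check C ∧ positive C ∧ lt C R ∧ ∀ X, Check X ∨ Remove X → ¬ (lt C X ∧ lt X R))
    (A8 : ∀ C, Check C → positive C → Deliver (ρ C) ∧ rn C < dn (ρ C))
    (A9 : ∀ D C, Deliver D → Check C → lt D C → rn C < dn D → positive C)
    (A10 : ∀ C D, Check C → positive C → Deliver D → lt C D → lt (ρ C) D)
    (tri : E → E → Prop)
    (htri : ∀ X Y, tri X Y ↔
      (Check X ∧ ¬ positive X ∧ Deliver Y ∧ rn X < dn Y) ∨
      (Deliver X ∧ Check Y ∧ positive Y ∧ dn X = rn Y + 1))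
    (lts : E → E → Prop)
    (hlts : ∀ X Y, lts X Y ↔ lt X Y ∨ tri X Y)
    (prec : E → E → Prop)
    (hsto : IsStrictTotalOrder E prec)
    (hext : ∀ X Y, lts X Y → prec X Y)
    : ∀ C, Check C → positive C →
      Set.ncard {R | Remove R ∧ prec R C} < Set.ncard {D | Deliver D ∧ prec D C} := by
  intro C hC hpos
  have hasymm : ∀ X Y, prec X Y → ¬ lt Y X := fun X Y h h' =>
    irrefl_of prec X (trans_of prec h (hext _ _ ((hlts _ _).2 (Or.inl h'))))
  have hrem : {R | Remove R ∧ prec R C} = {r | Remove r ∧ (r = C ∨ lt r C)} := by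
    ext r
    constructor
    · rintro ⟨hr, h⟩
      by_cases hrC : r = C
      · exact ⟨hr, Or.inl hrC⟩
      · exact ⟨hr, Or.inr ((A6_lin r C (Or.inr hr) (Or.inl hC) hrC).resolve_right (hasymm _ _ h))⟩
    · rintro ⟨hr, rfl | h⟩
      · exact absurd ⟨hC, hr⟩ (A4_cr _)
      · exact ⟨hr, hext _ _ ((hlts _ _).2 (Or.inl h))⟩
  obtain ⟨hρ, hlt⟩ := A8 C hC hpos
  obtain ⟨d, hd, hdn⟩ :=
    exists_deliver_dn_eq lt Deliver dn A1_irr A1_trans A3 A5_lin A5_dn (ρ C) hρ (rn C) hlt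
  have hdC : prec d C :=
    hext _ _ ((hlts _ _).2 (Or.inr ((htri _ _).2 (Or.inr ⟨hd, hC, hpos, hdn⟩))))
  -- Finiteness is what keeps `Set.ncard` of the preceding deliveries from being the junk value 0.
  have hfin : {D | Deliver D ∧ prec D C}.Finite :=
    (A3 C).subset fun x hx => hasymm _ _ hx.2
  have hle : dn d ≤ Set.ncard {D | Deliver D ∧ prec D C} := by
    rw [A5_dn d hd]
    refine Set.ncard_le_ncard ?_ hfin
    rintro x ⟨hx, rfl | h⟩
    · exact ⟨hx, hdC⟩
    · exact ⟨hx, trans_of prec (hext _ _ ((hlts _ _).2 (Or.inl h))) hdC⟩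
  rw [hrem, ← A6_rn C (Or.inl hC)]
  omega
end

section
/- If C' is a positive Check event and C is a Check event with C' < C, then rn(C') < rn(C). -/
/-! The Remove event `R` immediately following the positive check `C'` must precede `C`, since
otherwise `C` would lie strictly between `C'` and `R`. Hence `R` is counted by `rn C` but not by
`rn C'`, while every Remove event counted by `rn C'` is counted by `rn C`. -/

theorem stmt_13 {E : Type*} (lt : E → E → Prop)
    (Deliver Check Remove positive : E → Prop)
    (dn rn : E → ℕ)
    (A1_irr : ∀ X, ¬ lt X X)
    (A1_trans : ∀ X Y Z, lt X Y → lt Y Z → lt X Z)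
    (A2 : ∀ X₁ X₂ X₃ X₄, lt X₁ X₂ → lt X₃ X₄ → ¬ lt X₂ X₃ → ¬ lt X₃ X₂ → lt X₁ X₄)
    (A3 : ∀ A : E, {Y | ¬ lt A Y}.Finite)
    (A4_dc : ∀ X, ¬ (Deliver X ∧ Check X))
    (A4_dr : ∀ X, ¬ (Deliver X ∧ Remove X))
    (A4_cr : ∀ X, ¬ (Check X ∧ Remove X))
    (A5_lin : ∀ d₁ d₂, Deliver d₁ → Deliver d₂ → d₁ ≠ d₂ → lt d₁ d₂ ∨ lt d₂ d₁)
    (A5_dn : ∀ d, Deliver d → dn d = Set.ncard {d' | Deliver d' ∧ (d' = d ∨ lt d' d)})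
    (A6_lin : ∀ x₁ x₂, Check x₁ ∨ Remove x₁ → Check x₂ ∨ Remove x₂ → x₁ ≠ x₂ → lt x₁ x₂ ∨ lt x₂ x₁)
    (A6_rn : ∀ x, Check x ∨ Remove x → rn x = Set.ncard {r | Remove r ∧ (r = x ∨ lt r x)})
    (A7_check : ∀ C, Check C → positive C → ∃ R, Remove R ∧ lt C R ∧ ∀ X, Check X ∨ Remove X → ¬ (lt C X ∧ lt X R))
    (A7_rem : ∀ R, Remove R → ∃ C, Check C ∧ positive C ∧ lt C R ∧ ∀ X, Check X ∨ Remove X → ¬ (lt C X ∧ lt X R))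
    : ∀ C' C, Check C' → positive C' → Check C → lt C' C → rn C' < rn C := by
  intro C' C hC' hpos hC hlt
  obtain ⟨R, hR, hC'R, hnone⟩ := A7_check C' hC' hpos
  have hne : R ≠ C := fun h => A4_cr C ⟨hC, h ▸ hR⟩
  have hRC : lt R C := (A6_lin R C (Or.inr hR) (Or.inl hC) hne).resolve_right
    fun h => hnone C (Or.inl hC) ⟨hlt, h⟩
  rw [A6_rn C' (Or.inl hC'), A6_rn C (Or.inl hC)]
  -- Finiteness is needed because `Set.ncard` of an infinite set is `0`.
  have hfin : {r | Remove r ∧ (r = C ∨ lt r C)}.Finite := by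
    refine (A3 C).subset ?_
    rintro r ⟨-, rfl | h⟩ h'
    · exact A1_irr _ h'
    · exact A1_irr _ (A1_trans _ _ _ h h')
  refine Set.ncard_lt_ncard ((Set.ssubset_iff_of_subset ?_).2 ⟨R, ⟨hR, Or.inr hRC⟩, ?_⟩) hfin
  · rintro r ⟨hr, rfl | h⟩
    · exact ⟨hr, Or.inr hlt⟩
    · exact ⟨hr, Or.inr (A1_trans _ _ _ h hlt)⟩
  · rintro ⟨-, rfl | h⟩
    · exact A1_irr _ hC'R
    · exact A1_irr _ (A1_trans _ _ _ h hC'R)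
end

section
/- Suppose ≺ is a strict total order on the events extending < such that for every Check event C, C is positive if and only if remnum(C) < delnum(C). Then there exists a function ρ : E → E such that for every positive Check event C: ρ(C) is a Deliver event, rn(C) < dn(ρ(C)), and for every Deliver event D with C < D one has ρ(C) < D. -/
/-!
For a positive Check event `C`, let `S` be the set of Deliver events preceding `C` in the total
order `≺`. Since `≺` extends `<`, no element of `S` lies after `C` in `<`, so `S` is finite by (A3);
it is nonempty because `C` is positive. Take `ρ C` to be the `≺`-last element of `S`. On Deliver
events, and on homeowner events, `<` is already total and hence agrees with `≺`. So
`dn (ρ C) = |S| = delnum C` and `rn C = remnum C`, and `remnum C < delnum C` is the required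
inequality. A Deliver event after `C` in `<` is not in `S`, hence lies after `ρ C`.
-/


theorem stmt_15 {E : Type*} (lt : E → E → Prop)
    (Deliver Check Remove positive : E → Prop)
    (dn rn : E → ℕ)
    (A1_irr : ∀ X, ¬ lt X X)
    (A1_trans : ∀ X Y Z, lt X Y → lt Y Z → lt X Z)
    (A2 : ∀ X₁ X₂ X₃ X₄, lt X₁ X₂ → lt X₃ X₄ → ¬ lt X₂ X₃ → ¬ lt X₃ X₂ → lt X₁ X₄)
    (A3 : ∀ A : E, {Y | ¬ lt A Y}.Finite)
    (A4_dc : ∀ X, ¬ (Deliver X ∧ Check X))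
    (A4_dr : ∀ X, ¬ (Deliver X ∧ Remove X))
    (A4_cr : ∀ X, ¬ (Check X ∧ Remove X))
    (A5_lin : ∀ d₁ d₂, Deliver d₁ → Deliver d₂ → d₁ ≠ d₂ → lt d₁ d₂ ∨ lt d₂ d₁)
    (A5_dn : ∀ d, Deliver d → dn d = Set.ncard {d' | Deliver d' ∧ (d' = d ∨ lt d' d)})
    (A6_lin : ∀ x₁ x₂, Check x₁ ∨ Remove x₁ → Check x₂ ∨ Remove x₂ → x₁ ≠ x₂ → lt x₁ x₂ ∨ lt x₂ x₁)
    (A6_rn : ∀ x, Check x ∨ Remove x → rn x = Set.ncard {r | Remove r ∧ (r = x ∨ lt r x)})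
    (A7_check : ∀ C, Check C → positive C → ∃ R, Remove R ∧ lt C R ∧ ∀ X, Check X ∨ Remove X → ¬ (lt C X ∧ lt X R))
    (A7_rem : ∀ R, Remove R → ∃ C, Check C ∧ positive C ∧ lt C R ∧ ∀ X, Check X ∨ Remove X → ¬ (lt C X ∧ lt X R))
    (prec : E → E → Prop)
    (hsto : IsStrictTotalOrder E prec)
    (hext : ∀ X Y, lt X Y → prec X Y)
    (hval : ∀ C, Check C →
      (positive C ↔ Set.ncard {R | Remove R ∧ prec R C} < Set.ncard {D | Deliver D ∧ prec D C}))
    : ∃ ρ : E → E, ∀ C, Check C → positive C →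
      Deliver (ρ C) ∧ rn C < dn (ρ C) ∧ ∀ D, Deliver D → lt C D → lt (ρ C) D := by
  classical
  have tr : ∀ {X Y Z}, prec X Y → prec Y Z → prec X Z := fun h₁ h₂ => hsto.trans _ _ _ h₁ h₂
  have irr : ∀ X, ¬ prec X X := hsto.irrefl
  suffices h : ∀ C, ∃ d, Check C → positive C →
      Deliver d ∧ rn C < dn d ∧ ∀ D, Deliver D → lt C D → lt d D by
    choose ρ hρ using h
    exact ⟨ρ, hρ⟩
  intro C
  by_cases hC : Check C ∧ positive C
  swap
  · exact ⟨C, fun h₁ h₂ => absurd ⟨h₁, h₂⟩ hC⟩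
  obtain ⟨hC, hpos⟩ := hC
  have hlt := (hval C hC).1 hpos
  have hfin : {D | Deliver D ∧ prec D C}.Finite :=
    (A3 C).subset fun D hD h => irr _ (tr (hext _ _ h) hD.2)
  have hne : {D | Deliver D ∧ prec D C}.Nonempty :=
    Set.nonempty_of_ncard_ne_zero (by omega)
  obtain ⟨d, ⟨hd, hdC⟩, hmax⟩ : ∃ d ∈ {D | Deliver D ∧ prec D C},
      ∀ D ∈ {D | Deliver D ∧ prec D C}, ¬ prec d D := by
    letI := linearOrderOfSTO prec
    obtain ⟨d, hd, hm⟩ := Set.exists_max_image _ id hfin hne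
    exact ⟨d, hd, fun D hD => not_lt.2 (hm D hD)⟩
  refine ⟨d, fun _ _ => ⟨hd, ?_, ?_⟩⟩
  · have h₁ : {d' | Deliver d' ∧ (d' = d ∨ lt d' d)} = {D | Deliver D ∧ prec D C} := by
      ext D
      constructor
      · rintro ⟨hD, rfl | h⟩
        · exact ⟨hD, hdC⟩
        · exact ⟨hD, tr (hext _ _ h) hdC⟩
      · rintro ⟨hD, h⟩
        refine ⟨hD, or_iff_not_imp_left.2 fun hDd => ?_⟩
        exact (A5_lin D d hD hd hDd).resolve_right fun h' => hmax D ⟨hD, h⟩ (hext _ _ h')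
    have h₂ : {r | Remove r ∧ (r = C ∨ lt r C)} = {R | Remove R ∧ prec R C} := by
      ext R
      constructor
      · rintro ⟨hR, rfl | h⟩
        · exact absurd ⟨hC, hR⟩ (A4_cr R)
        · exact ⟨hR, hext _ _ h⟩
      · rintro ⟨hR, h⟩
        refine ⟨hR, or_iff_not_imp_left.2 fun hRC => ?_⟩
        exact (A6_lin R C (Or.inr hR) (Or.inl hC) hRC).resolve_right fun h' =>
          irr _ (tr h (hext _ _ h'))
    rw [A6_rn C (Or.inl hC), A5_dn d hd, h₁, h₂]
    exact hlt
  · intro D hD hCD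
    have hdD : prec d D := tr hdC (hext _ _ hCD)
    have hne' : d ≠ D := fun h => irr D (h ▸ hdD)
    exact (A5_lin d D hd hD hne').resolve_right fun h => irr _ (tr hdD (hext _ _ h))
end
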